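/- arXiv:2303.03547 — 2 statements merged into one kernel-verified Lean document; each statement's English description precedes it below -/
import Mathlib

section
/- Let B be an n×n real symmetric positive semi-definite matrix with rank(B) ≥ n−r for some r ≥ 1, partitioned as B = [[B11, B12],[B12^T, B22]] with B11 of order n−r and B22 of order r. If ‖B22‖₂ < λ_min(B11), then for each 1 ≤ j ≤ r, the eigenvalue λ_{n−r+j}(B) satisfies 0 ≤ λ_{n−r+j}(B) ≤ ‖B22‖₂ and λ_{n−r+j}(B) = λ_j( B22 − B12^T (B11 − λ_{n−r+j}(B) I)^{−1} B12 ), where eigenvalues are labelled in non-increasing order. -/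
open Matrix

/-- Spectral (L2 operator) norm of a real matrix. -/
noncomputable def specNorm {ι κ : Type*} [Fintype ι] [Fintype κ] [DecidableEq κ]
    (A : Matrix ι κ ℝ) : ℝ :=
  ‖LinearMap.toContinuousLinearMap
      (Matrix.toEuclideanLin A : EuclideanSpace ℝ κ →ₗ[ℝ] EuclideanSpace ℝ ι)‖

/-- Euclidean norm of a real vector. -/
noncomputable def enorm {ι : Type*} [Fintype ι] (v : ι → ℝ) : ℝ :=
  Real.sqrt (∑ i, v i ^ 2)

/-- The `j`-th largest eigenvalue (1-indexed, non-increasing order), realized as the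
`j`-th largest root (with multiplicity) of the characteristic polynomial. -/
noncomputable def eigvalDesc {ι : Type*} [Fintype ι] [DecidableEq ι]
    (A : Matrix ι ι ℝ) (j : ℕ) : ℝ :=
  (A.charpoly.roots.sort (· ≤ ·)).getD (Fintype.card ι - j) 0

/-- The smallest eigenvalue. -/
noncomputable def lmin {ι : Type*} [Fintype ι] [DecidableEq ι] (A : Matrix ι ι ℝ) : ℝ :=
  eigvalDesc A (Fintype.card ι)

/-- The `j`-th largest singular value (1-indexed, non-increasing order). -/
noncomputable def singvalDesc {ι κ : Type*} [Fintype ι] [Fintype κ] [DecidableEq κ]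
    (A : Matrix ι κ ℝ) (j : ℕ) : ℝ :=
  Real.sqrt (eigvalDesc (Aᵀ * A) j)

/-- The smallest singular value. -/
noncomputable def smin {ι κ : Type*} [Fintype ι] [Fintype κ] [DecidableEq κ]
    (A : Matrix ι κ ℝ) : ℝ :=
  Real.sqrt (lmin (Aᵀ * A))

/-!
For symmetric `A`, the `j`-th largest eigenvalue is pinned down by the numbers of eigenvalues `< x`
and `≤ x`: it equals `x` exactly when its index `card - j` in increasing order is at least the first
number and less than the second (`eigvalDesc_iff`). These numbers are the negative and nonpositive
indices of the form `A - x`, hence can only grow when passing to a form which restricts to a smaller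
one (`countP_le_of_form_le`, a version of Sylvester's law of inertia). This has two consequences.

* `B` restricts to `B22` on the last `r` coordinates, and all `r` eigenvalues of `B22` are at most
  `specNorm B22`; so the `r` smallest eigenvalues of `B` are at most `specNorm B22`.
* Let `x` be one of these. Then `x < lmin B11`, and block elimination is a congruence between `B - x`
  and `(B11 - x) ⊕ (M - x)` with `M = B22 - B12ᵀ (B11 - x)⁻¹ B12`. As `B11` contributes no eigenvalue
  `≤ x`, the two counts at `x` agree for `B` and `M` (`countP_fromBlocks`). Since
  `(p + r) - (p + j) = r - j`, `x` is the `(p + j)`-th eigenvalue of `B` and the `j`-th one of `M`.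
-/

/-! ### Ordered eigenvalues and eigenvalue counts -/

/-- In a sorted list, the `k`-th entry satisfies a downward closed property exactly when more than
`k` entries do. -/
lemma sorted_getD_iff (q : ℝ → Prop) [DecidablePred q] (hq : ∀ a b, a ≤ b → q b → q a)
    (l : List ℝ) (hl : l.Pairwise (· ≤ ·)) (k : ℕ) (hk : k < l.length) :
    q (l.getD k 0) ↔ k < l.countP (fun a => decide (q a)) := by
  induction l generalizing k with
  | nil => simp at hk
  | cons a l ih =>
    rw [List.pairwise_cons] at hl
    by_cases ha : q a
    · rw [List.countP_cons_of_pos (by simpa using ha)]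
      cases k with
      | zero => simp [ha]
      | succ k =>
        rw [List.getD_cons_succ, ih hl.2 k (by simpa using hk)]
        omega
    · have h0 : ∀ b ∈ a :: l, ¬ q b := by
        intro b hb hqb
        rcases List.mem_cons.1 hb with rfl | hb
        · exact ha hqb
        · exact ha (hq a b (hl.1 b hb) hqb)
      have hc : (a :: l).countP (fun a => decide (q a)) = 0 := by
        rw [List.countP_eq_zero]
        simpa using h0
      rw [hc]
      have hm : (a :: l).getD k 0 ∈ a :: l := by
        rw [List.getD_eq_getElem _ _ hk]; exact List.getElem_mem hk
      exact iff_of_false (h0 _ hm) (Nat.not_lt_zero _)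

lemma card_roots_of_isHermitian {ι : Type*} [Fintype ι] [DecidableEq ι] {A : Matrix ι ι ℝ}
    (hA : A.IsHermitian) : A.charpoly.roots.card = Fintype.card ι := by
  simp [hA.roots_charpoly_eq_eigenvalues]

/-- For `q` of the form `· ≤ x` or `· < x` this compares `eigvalDesc A j` with `x` by counting
eigenvalues; the bounds on `j` rule out the default value `0` of `eigvalDesc`. -/
lemma eigvalDesc_iff {ι : Type*} [Fintype ι] [DecidableEq ι] {A : Matrix ι ι ℝ}
    (hA : A.IsHermitian) (q : ℝ → Prop) [DecidablePred q] (hq : ∀ a b, a ≤ b → q b → q a)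
    {j : ℕ} (hj : 1 ≤ j) (hj' : j ≤ Fintype.card ι) :
    q (eigvalDesc A j) ↔ Fintype.card ι - j < A.charpoly.roots.countP q := by
  unfold eigvalDesc
  rw [sorted_getD_iff q hq]
  · conv_rhs => rw [← Multiset.sort_eq A.charpoly.roots (· ≤ ·), Multiset.coe_countP]
  · exact Multiset.pairwise_sort _ _
  · rw [Multiset.length_sort, card_roots_of_isHermitian hA]; omega

lemma eigvalDesc_mem {ι : Type*} [Fintype ι] [DecidableEq ι] {A : Matrix ι ι ℝ}
    (hA : A.IsHermitian) {j : ℕ} (hj : 1 ≤ j) (hj' : j ≤ Fintype.card ι) :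
    eigvalDesc A j ∈ A.charpoly.roots := by
  unfold eigvalDesc
  have h : Fintype.card ι - j < (A.charpoly.roots.sort (· ≤ ·)).length := by
    rw [Multiset.length_sort, card_roots_of_isHermitian hA]; omega
  rw [List.getD_eq_getElem _ _ h, ← Multiset.mem_sort (r := (· ≤ ·))]
  exact List.getElem_mem h

lemma lmin_le_of_mem_roots {ι : Type*} [Fintype ι] [DecidableEq ι] {A : Matrix ι ι ℝ}
    (hA : A.IsHermitian) {μ : ℝ} (hμ : μ ∈ A.charpoly.roots) : lmin A ≤ μ := by
  have hc : 1 ≤ Fintype.card ι := by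
    rw [← card_roots_of_isHermitian hA]
    exact Multiset.card_pos_iff_exists_mem.2 ⟨μ, hμ⟩
  refine (eigvalDesc_iff hA (· ≤ μ) (fun a b hab hb => hab.trans hb) hc le_rfl).2 ?_
  rw [Nat.sub_self, Multiset.countP_pos]
  exact ⟨μ, hμ, le_rfl⟩

/-! ### Inertia -/

/-- Sylvester's law of inertia for diagonal forms, as an inequality: pulling back a diagonal form
along an injective map does not raise its number of nonpositive (resp. negative) coefficients. The
pulled back form is only assumed to lie below a diagonal one. -/
lemma card_le_of_diagonal_form {m n : Type*} [Fintype m] [Fintype n]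
    (d : n → ℝ) (d' : m → ℝ) (P : (m → ℝ) →ₗ[ℝ] (n → ℝ)) (hP : Function.Injective P)
    (h : ∀ v, ∑ i, d i * (P v i) ^ 2 ≤ ∑ i, d' i * (v i) ^ 2)
    (q : ℝ → Prop) [DecidablePred q] (hq : q = (· ≤ 0) ∨ q = (· < 0)) :
    Fintype.card {i // q (d' i)} ≤ Fintype.card {i // q (d i)} := by
  by_contra! hlt
  -- A nonzero `v` supported on `{q ∘ d'}` whose image vanishes on `{q ∘ d}` exists by counting.
  let f : (m → ℝ) →ₗ[ℝ] ({i // ¬ q (d' i)} → ℝ) × ({i // q (d i)} → ℝ) :=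
    (LinearMap.funLeft ℝ ℝ Subtype.val).prod ((LinearMap.funLeft ℝ ℝ Subtype.val).comp P)
  have hf : LinearMap.ker f ≠ ⊥ := by
    apply LinearMap.ker_ne_bot_of_finrank_lt
    have h1 := Fintype.card_subtype_compl (fun i => q (d' i))
    have h2 := Fintype.card_subtype_le (fun i => q (d' i))
    rw [Module.finrank_prod, Module.finrank_fintype_fun_eq_card,
      Module.finrank_fintype_fun_eq_card, Module.finrank_fintype_fun_eq_card]
    omega
  obtain ⟨v, hv, hv0⟩ := (Submodule.ne_bot_iff _).1 hf
  have hv' : f v = 0 := hv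
  have hva : ∀ i, ¬ q (d' i) → v i = 0 := fun i hi =>
    congrFun (congrArg Prod.fst hv') ⟨i, hi⟩
  have hvb : ∀ i, q (d i) → P v i = 0 := fun i hi =>
    congrFun (congrArg Prod.snd hv') ⟨i, hi⟩
  have hw0 : P v ≠ 0 := fun hw => hv0 (hP (hw.trans (map_zero P).symm))
  obtain ⟨i, hi⟩ := Function.ne_iff.1 hv0
  obtain ⟨k, hk⟩ := Function.ne_iff.1 hw0
  have hvv := h v
  rcases hq with rfl | rfl
  · have hpos : 0 < ∑ i, d i * (P v i) ^ 2 := by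
      refine Finset.sum_pos' (fun i _ => ?_) ⟨k, Finset.mem_univ _, ?_⟩
      · by_cases hi : d i ≤ 0
        · simp [hvb i hi]
        · exact mul_nonneg (not_le.1 hi).le (sq_nonneg _)
      · exact mul_pos (not_le.1 fun hk' => hk (hvb k hk')) (sq_pos_of_ne_zero hk)
    have hneg : ∑ i, d' i * (v i) ^ 2 ≤ 0 := by
      refine Finset.sum_nonpos fun i _ => ?_
      by_cases hi : d' i ≤ 0
      · exact mul_nonpos_of_nonpos_of_nonneg hi (sq_nonneg _)
      · simp [hva i hi]
    linarith
  · have hpos : 0 ≤ ∑ i, d i * (P v i) ^ 2 := by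
      refine Finset.sum_nonneg fun i _ => ?_
      by_cases hi : d i < 0
      · simp [hvb i hi]
      · exact mul_nonneg (not_lt.1 hi) (sq_nonneg _)
    have hneg : ∑ i, d' i * (v i) ^ 2 < 0 := by
      refine Finset.sum_neg' (fun i _ => ?_) ⟨i, Finset.mem_univ _, ?_⟩
      · by_cases hi : d' i < 0
        · exact mul_nonpos_of_nonpos_of_nonneg hi.le (sq_nonneg _)
        · simp [hva i hi]
      · exact mul_neg_of_neg_of_pos (not_not.1 fun hk' => hi (hva i hk')) (sq_pos_of_ne_zero hi)
    linarith

lemma countP_roots {ι : Type*} [Fintype ι] [DecidableEq ι] {A : Matrix ι ι ℝ}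
    (hA : A.IsHermitian) (q : ℝ → Prop) [DecidablePred q] :
    A.charpoly.roots.countP q = Fintype.card {i // q (hA.eigenvalues i)} := by
  rw [hA.roots_charpoly_eq_eigenvalues, Multiset.countP_map, Fintype.card_subtype]
  rfl

/-- The quadratic form of `A - x` in the coordinates of an orthonormal eigenbasis. -/
lemma form_eq {ι : Type*} [Fintype ι] [DecidableEq ι] {A : Matrix ι ι ℝ}
    (hA : A.IsHermitian) (x : ℝ) (v : ι → ℝ) :
    ∑ i, (hA.eigenvalues i - x) * (((hA.eigenvectorUnitary : Matrix ι ι ℝ)ᵀ *ᵥ v) i) ^ 2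
      = v ⬝ᵥ (A - x • 1) *ᵥ v := by
  have hU : (hA.eigenvectorUnitary : Matrix ι ι ℝ) * (hA.eigenvectorUnitary : Matrix ι ι ℝ)ᵀ = 1 :=
    Unitary.coe_mul_star_self hA.eigenvectorUnitary
  have hs : A = (hA.eigenvectorUnitary : Matrix ι ι ℝ) * diagonal hA.eigenvalues *
      (hA.eigenvectorUnitary : Matrix ι ι ℝ)ᵀ := by
    have := hA.spectral_theorem
    rw [Unitary.conjStarAlgAut_apply] at this
    exact this
  generalize (hA.eigenvectorUnitary : Matrix ι ι ℝ) = U at *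
  generalize hA.eigenvalues = e at *
  have h1 : A - x • (1 : Matrix ι ι ℝ) = U * (diagonal e - x • 1) * Uᵀ := by
    rw [mul_sub, sub_mul, ← hs]
    simp [hU]
  rw [h1, ← mulVec_mulVec, ← mulVec_mulVec, dotProduct_mulVec, ← mulVec_transpose, sub_mulVec]
  simp only [dotProduct, Pi.sub_apply, mulVec_diagonal, smul_mulVec, one_mulVec, Pi.smul_apply,
    smul_eq_mul]
  exact Finset.sum_congr rfl fun i _ => by ring

/-- If the form of `A - x` pulls back along an injective `P` to a form bounded above by that of
`A' - x`, then `A` has at least as many eigenvalues `≤ x` (resp. `< x`) as `A'`. -/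
lemma countP_le_of_form_le {m n : Type*} [Fintype m] [Fintype n] [DecidableEq m] [DecidableEq n]
    {A : Matrix n n ℝ} {A' : Matrix m m ℝ} (hA : A.IsHermitian) (hA' : A'.IsHermitian) (x : ℝ)
    (P : (m → ℝ) →ₗ[ℝ] (n → ℝ)) (hP : Function.Injective P)
    (h : ∀ v, P v ⬝ᵥ (A - x • 1) *ᵥ P v ≤ v ⬝ᵥ (A' - x • 1) *ᵥ v)
    (q : ℝ → Prop) [DecidablePred q] (hq : q = (· ≤ x) ∨ q = (· < x)) :
    A'.charpoly.roots.countP q ≤ A.charpoly.roots.countP q := by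
  rw [countP_roots hA, countP_roots hA']
  set U := (hA.eigenvectorUnitary : Matrix n n ℝ) with hU
  set U' := (hA'.eigenvectorUnitary : Matrix m m ℝ) with hU'
  have hUU : U * Uᵀ = 1 := Unitary.coe_mul_star_self hA.eigenvectorUnitary
  have hUU' : U'ᵀ * U' = 1 := Unitary.coe_star_mul_self hA'.eigenvectorUnitary
  have key := card_le_of_diagonal_form (fun i => hA.eigenvalues i - x)
    (fun i => hA'.eigenvalues i - x) (Uᵀ.mulVecLin ∘ₗ P ∘ₗ U'.mulVecLin) ?_ ?_
    (fun t => q (t + x)) ?_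
  · simpa using key
  · have h1 : Function.Injective Uᵀ.mulVecLin :=
      Function.LeftInverse.injective (g := U.mulVecLin) fun v => by
        rw [mulVecLin_apply, mulVecLin_apply, mulVec_mulVec, hUU, one_mulVec]
    have h2 : Function.Injective U'.mulVecLin :=
      Function.LeftInverse.injective (g := U'ᵀ.mulVecLin) fun v => by
        rw [mulVecLin_apply, mulVecLin_apply, mulVec_mulVec, hUU', one_mulVec]
    exact h1.comp (hP.comp h2)
  · intro v
    have h1 := form_eq hA x (P (U' *ᵥ v))
    have h2 := form_eq hA' x (U' *ᵥ v)
    rw [← hU] at h1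
    rw [← hU', mulVec_mulVec, hUU', one_mulVec] at h2
    simp only [LinearMap.comp_apply, mulVecLin_apply]
    rw [h1, h2]
    exact h _
  · rcases hq with rfl | rfl
    · left; funext t; simp
    · right; funext t; simp

/-! ### The eigenvalue bound and the Schur complement -/

lemma root_le_specNorm {ι : Type*} [Fintype ι] [DecidableEq ι] {A : Matrix ι ι ℝ}
    (hA : A.IsHermitian) {μ : ℝ} (hμ : μ ∈ A.charpoly.roots) : μ ≤ specNorm A := by
  rw [hA.roots_charpoly_eq_eigenvalues, Multiset.mem_map] at hμ
  obtain ⟨i, -, rfl⟩ := hμ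
  have h1 := hA.mulVec_eigenvectorBasis i
  have h2 := (LinearMap.toContinuousLinearMap
      (Matrix.toEuclideanLin A : EuclideanSpace ℝ ι →ₗ[ℝ] EuclideanSpace ℝ ι)).le_opNorm
        (hA.eigenvectorBasis i)
  have h3 : Matrix.toEuclideanLin A (hA.eigenvectorBasis i) =
      hA.eigenvalues i • hA.eigenvectorBasis i := by
    rw [toLpLin_apply, h1]; rfl
  rw [LinearMap.coe_toContinuousLinearMap', h3, norm_smul, hA.eigenvectorBasis.norm_eq_one,
    mul_one, mul_one] at h2
  exact (le_abs_self _).trans h2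

lemma fromBlocks_sub_smul_one {m n : Type*} [DecidableEq m] [DecidableEq n]
    (A : Matrix m m ℝ) (C : Matrix m n ℝ) (E : Matrix n m ℝ) (D : Matrix n n ℝ) (x : ℝ) :
    fromBlocks A C E D - x • 1 = fromBlocks (A - x • 1) C E (D - x • 1) := by
  rw [← fromBlocks_one, fromBlocks_smul, sub_eq_add_neg, fromBlocks_neg, fromBlocks_add]
  simp [sub_eq_add_neg]

/-- Haynsworth's inertia additivity, relative to a shift `x` below the spectrum of the leading
block: `fromBlocks A C Cᵀ D` and the shifted Schur complement `D - Cᵀ (A - x)⁻¹ C` have equally many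
eigenvalues `≤ x` (resp. `< x`). -/
lemma countP_fromBlocks {m n : Type*} [Fintype m] [Fintype n] [DecidableEq m] [DecidableEq n]
    {A : Matrix m m ℝ} (C : Matrix m n ℝ) {D : Matrix n n ℝ} (hA : A.IsHermitian)
    (hD : D.IsHermitian) {x : ℝ} (hx : ∀ μ ∈ A.charpoly.roots, x < μ)
    (q : ℝ → Prop) [DecidablePred q] (hq : q = (· ≤ x) ∨ q = (· < x)) :
    (D - Cᵀ * (A - x • 1)⁻¹ * C).IsHermitian ∧
    (fromBlocks A C Cᵀ D).charpoly.roots.countP q =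
      (D - Cᵀ * (A - x • 1)⁻¹ * C).charpoly.roots.countP q := by
  have hAx : (A - x • (1 : Matrix m m ℝ)).IsHermitian := by
    refine hA.sub ?_
    rw [IsHermitian, conjTranspose_smul]; simp
  have hdet : IsUnit (A - x • (1 : Matrix m m ℝ)).det := by
    rw [isUnit_iff_ne_zero]
    intro h0
    have : x ∈ A.charpoly.roots := by
      rw [Polynomial.mem_roots A.charpoly_monic.ne_zero, Polynomial.IsRoot, eval_charpoly,
        ← neg_sub, det_neg]
      have : scalar m x = x • (1 : Matrix m m ℝ) := by
        rw [scalar_apply, smul_one_eq_diagonal]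
      rw [this, h0, mul_zero]
    exact lt_irrefl _ (hx x this)
  set M := D - Cᵀ * (A - x • 1)⁻¹ * C with hM
  have hMh : M.IsHermitian := by
    refine hD.sub ?_
    have := isHermitian_conjTranspose_mul_mul C hAx.inv
    simpa [conjTranspose_eq_transpose_of_trivial] using this
  have hBh : (fromBlocks A C Cᵀ D).IsHermitian :=
    hA.fromBlocks (conjTranspose_eq_transpose_of_trivial C) hD
  have hEh : (fromBlocks A 0 0 M).IsHermitian := hA.fromBlocks (by simp) hMh
  refine ⟨hMh, ?_⟩
  have hE : (fromBlocks A 0 0 M).charpoly.roots.countP q = M.charpoly.roots.countP q := by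
    rw [charpoly_fromBlocks_zero₁₂, Polynomial.roots_mul
      (mul_ne_zero A.charpoly_monic.ne_zero M.charpoly_monic.ne_zero), Multiset.countP_add]
    have : A.charpoly.roots.countP q = 0 := by
      rw [Multiset.countP_eq_zero]
      intro μ hμ
      rcases hq with rfl | rfl
      · exact not_le.2 (hx μ hμ)
      · exact not_lt.2 (hx μ hμ).le
    rw [this, zero_add]
  rw [← hE]
  set P : Matrix (m ⊕ n) (m ⊕ n) ℝ := fromBlocks 1 ((A - x • 1)⁻¹ * C) 0 1 with hP
  have hPdet : IsUnit P.det := by simp [hP]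
  have hcong : fromBlocks A C Cᵀ D - x • 1 = Pᵀ * (fromBlocks A 0 0 M - x • 1) * P := by
    let := invertibleOfIsUnitDet _ hdet
    have h1 : fromBlocks A C Cᵀ D - x • 1 = fromBlocks (A - x • 1) C Cᵀ (D - x • 1) :=
      fromBlocks_sub_smul_one ..
    have h2 : fromBlocks A 0 0 M - x • 1 = fromBlocks (A - x • 1) 0 0 (M - x • 1) :=
      fromBlocks_sub_smul_one ..
    have hinv : ((A - x • (1 : Matrix m m ℝ))⁻¹)ᵀ = (A - x • 1)⁻¹ := by
      simpa [conjTranspose_eq_transpose_of_trivial] using hAx.inv.eq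
    rw [h1, h2, fromBlocks_eq_of_invertible₁₁, hP, fromBlocks_transpose, transpose_mul, hinv,
      invOf_eq_nonsing_inv, hM]
    simp [sub_right_comm]
  have hform : ∀ v, (P *ᵥ v) ⬝ᵥ (fromBlocks A 0 0 M - x • 1) *ᵥ (P *ᵥ v) =
      v ⬝ᵥ (fromBlocks A C Cᵀ D - x • 1) *ᵥ v := by
    intro v
    rw [hcong, ← mulVec_mulVec, ← mulVec_mulVec, dotProduct_mulVec v, ← mulVec_transpose,
      transpose_transpose]
  have hl : P⁻¹ * P = 1 := nonsing_inv_mul _ hPdet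
  have hr : P * P⁻¹ = 1 := mul_nonsing_inv _ hPdet
  apply le_antisymm
  · refine countP_le_of_form_le hEh hBh x P.mulVecLin ?_ (fun v => (hform v).le) q hq
    exact Function.LeftInverse.injective (g := P⁻¹.mulVecLin) fun v => by simp [hl]
  · refine countP_le_of_form_le hBh hEh x P⁻¹.mulVecLin ?_ (fun v => ?_) q hq
    · exact Function.LeftInverse.injective (g := P.mulVecLin) fun v => by simp [hr]
    · rw [mulVecLin_apply, ← hform, mulVec_mulVec, hr, one_mulVec]

theorem stmt6 (p r : ℕ) (hr : 1 ≤ r)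
    (B : Matrix (Fin p ⊕ Fin r) (Fin p ⊕ Fin r) ℝ)
    (B11 : Matrix (Fin p) (Fin p) ℝ) (B12 : Matrix (Fin p) (Fin r) ℝ)
    (B22 : Matrix (Fin r) (Fin r) ℝ)
    (hBdef : B = fromBlocks B11 B12 B12ᵀ B22)
    (hB : B.PosSemidef) (hrank : p ≤ B.rank)
    (hsep : specNorm B22 < lmin B11) :
    ∀ j : ℕ, 1 ≤ j → j ≤ r →
      0 ≤ eigvalDesc B (p + j) ∧ eigvalDesc B (p + j) ≤ specNorm B22 ∧
      eigvalDesc B (p + j) =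
        eigvalDesc (B22 - B12ᵀ * (B11 - eigvalDesc B (p + j) • 1)⁻¹ * B12) j := by
  intro j hj hjr
  subst hBdef
  obtain ⟨h11, -, -, h22⟩ := isHermitian_fromBlocks_iff.1 hB.isHermitian
  have hcard : p + j ≤ Fintype.card (Fin p ⊕ Fin r) := by simp; omega
  have hj1 : 1 ≤ p + j := by omega
  have hidx : Fintype.card (Fin p ⊕ Fin r) - (p + j) = r - j := by simp; omega
  have hnonneg : 0 ≤ eigvalDesc (fromBlocks B11 B12 B12ᵀ B22) (p + j) := by
    have hmem := eigvalDesc_mem hB.isHermitian hj1 hcard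
    rw [hB.isHermitian.roots_charpoly_eq_eigenvalues, Multiset.mem_map] at hmem
    obtain ⟨i, -, hi⟩ := hmem
    rw [← hi]
    exact hB.eigenvalues_nonneg i
  have hle : eigvalDesc (fromBlocks B11 B12 B12ᵀ B22) (p + j) ≤ specNorm B22 := by
    -- `B` restricts to `B22` on the last `r` coordinates, so it has at least `r` eigenvalues
    -- bounded by `specNorm B22`.
    refine (eigvalDesc_iff hB.isHermitian (· ≤ specNorm B22)
      (fun a b hab hb => hab.trans hb) hj1 hcard).2 ?_
    rw [hidx]
    have h1 : B22.charpoly.roots.countP (· ≤ specNorm B22) = r := by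
      rw [Multiset.countP_eq_card.2 fun μ hμ => root_le_specNorm h22 hμ,
        card_roots_of_isHermitian h22, Fintype.card_fin]
    have h2 := countP_le_of_form_le hB.isHermitian h22 (specNorm B22)
      (fromRows (0 : Matrix (Fin p) (Fin r) ℝ) 1).mulVecLin
      (fun v w hvw => by
        funext i
        simpa [fromRows_mulVec] using congrFun hvw (Sum.inr i))
      (fun v => by
        rw [fromBlocks_sub_smul_one]
        have h0 : B12ᵀ *ᵥ (fun _ => 0) = 0 := mulVec_zero _
        simp [fromRows_mulVec, fromBlocks_mulVec, dotProduct, Fintype.sum_sum_type,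
          Function.comp_def, h0])
      (· ≤ specNorm B22) (Or.inl rfl)
    omega
  refine ⟨hnonneg, hle, ?_⟩
  generalize hx : eigvalDesc (fromBlocks B11 B12 B12ᵀ B22) (p + j) = x at *
  have hroot : ∀ μ ∈ B11.charpoly.roots, x < μ := fun μ hμ =>
    (hle.trans_lt hsep).trans_le (lmin_le_of_mem_roots h11 hμ)
  obtain ⟨hM, hc1⟩ := countP_fromBlocks B12 h11 h22 hroot (· ≤ x) (Or.inl rfl)
  obtain ⟨-, hc2⟩ := countP_fromBlocks B12 h11 h22 hroot (· < x) (Or.inr rfl)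
  have hjr' : j ≤ Fintype.card (Fin r) := by simpa using hjr
  have e1 := eigvalDesc_iff hB.isHermitian (· ≤ x) (fun a b hab hb => hab.trans hb) hj1 hcard
  have e2 := eigvalDesc_iff hB.isHermitian (· < x) (fun a b hab hb => hab.trans_lt hb) hj1 hcard
  have e3 := eigvalDesc_iff hM (· ≤ x) (fun a b hab hb => hab.trans hb) hj hjr'
  have e4 := eigvalDesc_iff hM (· < x) (fun a b hab hb => hab.trans_lt hb) hj hjr'
  rw [hidx, hx, hc1] at e1
  rw [hidx, hx, hc2] at e2
  rw [Fintype.card_fin, ← e1] at e3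
  rw [Fintype.card_fin, ← e2] at e4
  exact (le_antisymm (e3.2 le_rfl) (not_lt.1 fun h => lt_irrefl x (e4.1 h))).symm
end

section
/- Let B be an n×n real symmetric positive semi-definite matrix with rank(B) ≥ n−r for some r ≥ 1, partitioned as B = [[B11, B12],[B12^T, B22]] with B11 of order n−r and B22 of order r. Suppose B11 = C11 + C12 where C11 is symmetric positive definite with λ_min(C11) > ‖B22‖₂ and C12 is symmetric positive semi-definite. Then for 1 ≤ j ≤ r, λ_{n−r+j}(B) ≥ λ_j( B22 − B12^T C11^{−1} B12 ) − ‖B22‖₂·‖C11^{−1} B12‖₂² / (1 − ‖B22‖₂·‖C11^{−1}‖₂), where eigenvalues are labelled in non-increasing order. -/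
/-!
Write `σ = ‖B22‖`, `m = λ_min(C11)`, `K = C11⁻¹ B12`, `S = B22 - B12ᵀ C11⁻¹ B12`, and let `c` be the
error term, so that `c = σ ‖K‖² / (1 - σ/m)` because `‖C11⁻¹‖ = 1/m` (`specNorm_inv`). Put
`t = λ_j(S) - c`, and suppose that `λ_{p+j}(B) < t`. Since `B` is positive semi-definite, `t ≥ 0`;
since `S ≤ B22`, also `t ≤ σ < m`.

The conditions that `(x, y)` be orthogonal to the first `p + j - 1` eigenvectors of `B`, and `y` to
the last `r - j` eigenvectors of `S`, are `p + r - 1` linear conditions on a space of dimension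
`p + r`, so some `(x, y) ≠ 0` satisfies them all. For it, the quadratic form of `B` is at most
`λ_{p+j}(B) (|x|² + |y|²)`, and `yᵀSy ≥ λ_j(S) |y|²`.

On the other hand, with `z = K y` and `w = x + z`, dropping `C12 ≥ 0` gives
`B(x, y) ≥ wᵀ C11 w + yᵀSy ≥ m |w|² + λ_j(S) |y|²`, and minimizing over `w` gives
`m |w|² - t |w - z|² ≥ -t m / (m - t) |z|² ≥ -c |y|²` (`block_form_lower_bound`). Hence
`B(x, y) ≥ t (|x|² + |y|²)`, a contradiction.
-/

open Matrix

/-- An orthonormal eigenbasis of a symmetric matrix in coordinates, with the eigenvalues in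
non-increasing order and matched to `eigvalDesc` (whose index is shifted by one). -/
theorem exists_spectral_data {ι : Type*} [Fintype ι] [DecidableEq ι] {A : Matrix ι ι ℝ}
    (hA : A.IsHermitian) :
    ∃ (l : Fin (Fintype.card ι) → ℝ) (v : Fin (Fintype.card ι) → ι → ℝ),
      Antitone l ∧ (∀ i, A *ᵥ v i = l i • v i) ∧ (∀ i, v i ⬝ᵥ v i = 1) ∧
      (∀ x, x ⬝ᵥ x = ∑ i, (v i ⬝ᵥ x) ^ 2) ∧
      (∀ x, x ⬝ᵥ (A *ᵥ x) = ∑ i, l i * (v i ⬝ᵥ x) ^ 2) ∧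
      (∀ i : Fin (Fintype.card ι), eigvalDesc A (i + 1) = l i) := by
  set e : Fin (Fintype.card ι) ≃ ι := Fintype.equivOfCardEq (Fintype.card_fin _) with he
  set v : Fin (Fintype.card ι) → ι → ℝ := fun k => ⇑(hA.eigenvectorBasis (e k)) with hv
  have hAv : ∀ i, A *ᵥ v i = hA.eigenvalues₀ i • v i := fun i => by
    have h := hA.mulVec_eigenvectorBasis (e i)
    simpa [IsHermitian.eigenvalues, ← he] using h
  have hpars : ∀ x y : ι → ℝ, x ⬝ᵥ y = ∑ i, (v i ⬝ᵥ x) * (v i ⬝ᵥ y) := fun x y => by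
    have h := hA.eigenvectorBasis.sum_inner_mul_inner (WithLp.toLp 2 x) (WithLp.toLp 2 y)
    rw [← e.sum_comp] at h
    simp only [EuclideanSpace.inner_eq_star_dotProduct, star_trivial] at h
    rw [dotProduct_comm x y, ← h]
    refine Finset.sum_congr rfl fun i _ => ?_
    rw [dotProduct_comm (v i) y]
  refine ⟨hA.eigenvalues₀, v, hA.eigenvalues₀_antitone, hAv, ?_, ?_, ?_, ?_⟩
  · intro i
    have h := hA.eigenvectorBasis.orthonormal.1 (e i)
    have h2 : inner ℝ (hA.eigenvectorBasis (e i)) (hA.eigenvectorBasis (e i)) = (1 : ℝ) := by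
      rw [real_inner_self_eq_norm_sq, h]; norm_num
    rwa [EuclideanSpace.inner_eq_star_dotProduct, star_trivial] at h2
  · intro x
    simp_rw [hpars x x, sq]
  · intro x
    rw [hpars]
    refine Finset.sum_congr rfl fun i _ => ?_
    have hT : Aᵀ = A := hA
    have : v i ⬝ᵥ (A *ᵥ x) = hA.eigenvalues₀ i * (v i ⬝ᵥ x) := by
      rw [dotProduct_mulVec, ← mulVec_transpose, hT, hAv, smul_dotProduct, smul_eq_mul]
    rw [this]; ring
  · intro i
    have h1 : A.charpoly.roots.sort (· ≤ ·) = (List.ofFn hA.eigenvalues₀).reverse := by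
      apply List.Perm.eq_of_pairwise' (r := (· ≤ ·))
      · exact Multiset.pairwise_sort _ _
      · rw [List.pairwise_reverse]
        exact hA.eigenvalues₀_antitone.sortedGE_ofFn.pairwise
      · refine List.Perm.trans ?_ (List.reverse_perm _).symm
        rw [← Multiset.coe_eq_coe, Multiset.sort_eq, hA.roots_charpoly_eq_eigenvalues₀]
        simp [Fin.univ_val_map]
    have hi := i.2
    rw [eigvalDesc, h1, List.getD_eq_getElem _ _ (by simp; omega)]
    rw [List.getElem_reverse, List.getElem_ofFn]
    congr 1
    ext
    simp
    omega

theorem dotProduct_self_nonneg' {ι : Type*} [Fintype ι] (x : ι → ℝ) : 0 ≤ x ⬝ᵥ x :=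
  Finset.sum_nonneg fun i _ => mul_self_nonneg (x i)

theorem norm_toLp_sq {ι : Type*} [Fintype ι] (x : ι → ℝ) :
    ‖(WithLp.toLp 2 x : EuclideanSpace ℝ ι)‖ ^ 2 = x ⬝ᵥ x := by
  rw [← real_inner_self_eq_norm_sq, EuclideanSpace.inner_eq_star_dotProduct, star_trivial]

theorem specNorm_nonneg {ι κ : Type*} [Fintype ι] [Fintype κ] [DecidableEq κ]
    (A : Matrix ι κ ℝ) : 0 ≤ specNorm A := norm_nonneg _

theorem mulVec_dotProduct_self_le {ι κ : Type*} [Fintype ι] [Fintype κ] [DecidableEq κ]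
    (A : Matrix ι κ ℝ) (x : κ → ℝ) :
    (A *ᵥ x) ⬝ᵥ (A *ᵥ x) ≤ specNorm A ^ 2 * (x ⬝ᵥ x) := by
  have h := (LinearMap.toContinuousLinearMap
      (Matrix.toEuclideanLin A : EuclideanSpace ℝ κ →ₗ[ℝ] EuclideanSpace ℝ ι)).le_opNorm
      (WithLp.toLp 2 x)
  rw [← norm_toLp_sq, ← norm_toLp_sq x, ← mul_pow]
  exact pow_le_pow_left₀ (norm_nonneg _) h 2

theorem specNorm_le {ι κ : Type*} [Fintype ι] [Fintype κ] [DecidableEq κ]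
    (A : Matrix ι κ ℝ) {M : ℝ} (hM : 0 ≤ M)
    (h : ∀ x, (A *ᵥ x) ⬝ᵥ (A *ᵥ x) ≤ M ^ 2 * (x ⬝ᵥ x)) : specNorm A ≤ M := by
  refine ContinuousLinearMap.opNorm_le_bound _ hM fun x => ?_
  refine le_of_sq_le_sq ?_ (by positivity)
  have h' := h x.ofLp
  rw [← norm_toLp_sq, ← norm_toLp_sq x.ofLp, ← mul_pow] at h'
  exact h'

theorem dotProduct_sq_le {ι : Type*} [Fintype ι] (x y : ι → ℝ) :
    (x ⬝ᵥ y) ^ 2 ≤ (x ⬝ᵥ x) * (y ⬝ᵥ y) := by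
  simpa [dotProduct, sq] using Finset.sum_mul_sq_le_sq_mul_sq Finset.univ x y

theorem quad_le_specNorm {ι : Type*} [Fintype ι] [DecidableEq ι]
    (A : Matrix ι ι ℝ) (x : ι → ℝ) : x ⬝ᵥ (A *ᵥ x) ≤ specNorm A * (x ⬝ᵥ x) := by
  refine le_of_sq_le_sq ?_ (mul_nonneg (specNorm_nonneg A) (dotProduct_self_nonneg' x))
  have h1 := dotProduct_sq_le x (A *ᵥ x)
  have h2 := mul_le_mul_of_nonneg_left (mulVec_dotProduct_self_le A x) (dotProduct_self_nonneg' x)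
  nlinarith

theorem lmin_mul_le {ι : Type*} [Fintype ι] [DecidableEq ι] {A : Matrix ι ι ℝ}
    (hA : A.IsHermitian) (x : ι → ℝ) : lmin A * (x ⬝ᵥ x) ≤ x ⬝ᵥ (A *ᵥ x) := by
  obtain ⟨l, v, hl, -, -, hxx, hxA, hev⟩ := exists_spectral_data hA
  rw [hxx, hxA, Finset.mul_sum]
  refine Finset.sum_le_sum fun i _ => mul_le_mul_of_nonneg_right ?_ (sq_nonneg _)
  have hi := i.2
  have h := hev ⟨Fintype.card ι - 1, by omega⟩
  have hc : Fintype.card ι - 1 + 1 = Fintype.card ι := by omega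
  simp only [hc] at h
  rw [lmin, h]
  exact hl (Fin.le_def.2 (by simp; omega))

/-- The smallest eigenvalue of a positive definite matrix is the reciprocal of the spectral norm
of its inverse. -/
theorem specNorm_inv {ι : Type*} [Fintype ι] [DecidableEq ι] {C : Matrix ι ι ℝ}
    (hC : C.PosDef) (hpos : 0 < lmin C) (hne : 0 < Fintype.card ι) :
    specNorm C⁻¹ = (lmin C)⁻¹ := by
  have hdet : IsUnit C.det := hC.det_pos.ne'.isUnit
  apply le_antisymm
  · refine specNorm_le _ (by positivity) fun x => ?_
    set y := C⁻¹ *ᵥ x with hy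
    have hCy : C *ᵥ y = x := by rw [hy, mulVec_mulVec, mul_nonsing_inv _ hdet, one_mulVec]
    -- `m |y|² ≤ yᵀ C y = yᵀ x ≤ |y| |x|`, hence `m |y| ≤ |x|`
    have h1 := lmin_mul_le hC.1 y
    rw [hCy] at h1
    have h2 := dotProduct_sq_le y x
    have hy0 := dotProduct_self_nonneg' y
    have hx0 := dotProduct_self_nonneg' x
    rw [inv_pow, ← div_eq_inv_mul, le_div_iff₀ (by positivity)]
    rcases hy0.eq_or_lt with h | h
    · rw [← h]; simpa using hx0
    · have h3 : (lmin C * (y ⬝ᵥ y)) ^ 2 ≤ (y ⬝ᵥ y) * (x ⬝ᵥ x) :=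
        (pow_le_pow_left₀ (by positivity) h1 2).trans h2
      refine le_of_mul_le_mul_left ?_ h
      linarith
  -- an eigenvector for the least eigenvalue attains the norm of the inverse
  · obtain ⟨l, v, -, hAv, hvv, -, -, hev⟩ := exists_spectral_data hC.1
    set k : Fin (Fintype.card ι) := ⟨Fintype.card ι - 1, by omega⟩ with hk
    have hl : lmin C = l k := by
      rw [← hev k, lmin]; congr 1; simp [hk]; omega
    rw [hl] at hpos ⊢
    have h1 : C⁻¹ *ᵥ v k = (l k)⁻¹ • v k := by
      have : v k = (l k)⁻¹ • (C *ᵥ v k) := by rw [hAv, smul_smul, inv_mul_cancel₀ hpos.ne', one_smul]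
      conv_lhs => rw [this]
      rw [mulVec_smul, mulVec_mulVec, nonsing_inv_mul _ hdet, one_mulVec]
    have h2 := mulVec_dotProduct_self_le C⁻¹ (v k)
    rw [h1, smul_dotProduct, dotProduct_smul, hvv] at h2
    refine le_of_sq_le_sq ?_ (specNorm_nonneg _)
    simpa [sq] using h2

/-- The form `[[C - t, E], [Eᵀ, Eᵀ C⁻¹ E + c]]` is nonnegative for
`c = s ‖C⁻¹ E‖² / (1 - s / λ_min(C))` and `0 ≤ t ≤ s < λ_min(C)`. With `z = C⁻¹ E y` it equals
`(x + z)ᵀ C (x + z) - t |x|² + c |y|²`; bounding `C` below by its least eigenvalue `m` leaves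
a quadratic form in `x + z` and `z`, whose square is completed by the vector
`(m - t) (x + z) + t z`. -/
theorem block_form_lower_bound {p r : ℕ} {C : Matrix (Fin p) (Fin p) ℝ}
    (E : Matrix (Fin p) (Fin r) ℝ) (hC : C.PosDef) {s t : ℝ} (ht : 0 ≤ t) (hts : t ≤ s)
    (hgap : s < lmin C) (x : Fin p → ℝ) (y : Fin r → ℝ) :
    0 ≤ x ⬝ᵥ (C *ᵥ x) + 2 * (x ⬝ᵥ (E *ᵥ y)) + y ⬝ᵥ ((Eᵀ * C⁻¹ * E) *ᵥ y) - t * (x ⬝ᵥ x)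
      + s * specNorm (C⁻¹ * E) ^ 2 / (1 - s * (lmin C)⁻¹) * (y ⬝ᵥ y) := by
  have hdet : IsUnit C.det := hC.det_pos.ne'.isUnit
  have hCT : Cᵀ = C := hC.1
  set m := lmin C with hm
  set k := specNorm (C⁻¹ * E)
  have hm0 : 0 < m := by linarith
  set z := (C⁻¹ * E) *ᵥ y with hz
  have hCz : C *ᵥ z = E *ᵥ y := by
    rw [hz, mulVec_mulVec, ← Matrix.mul_assoc, mul_nonsing_inv _ hdet, Matrix.one_mul]
  have hquad : y ⬝ᵥ ((Eᵀ * C⁻¹ * E) *ᵥ y) = z ⬝ᵥ (C *ᵥ z) := by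
    rw [hCz, Matrix.mul_assoc, ← mulVec_mulVec, ← hz, dotProduct_mulVec, vecMul_transpose,
      dotProduct_comm]
  have hsymm : z ⬝ᵥ (C *ᵥ x) = x ⬝ᵥ (C *ᵥ z) := by
    rw [dotProduct_mulVec, ← mulVec_transpose, hCT, dotProduct_comm]
  have h1 := lmin_mul_le hC.1 (x + z)
  have hzz : z ⬝ᵥ z ≤ k ^ 2 * (y ⬝ᵥ y) := mulVec_dotProduct_self_le _ y
  have hsq := dotProduct_self_nonneg' ((m - t) • (x + z) + t • z)
  have hxz : z ⬝ᵥ x = x ⬝ᵥ z := dotProduct_comm _ _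
  simp only [mulVec_add, dotProduct_add, add_dotProduct, smul_dotProduct, dotProduct_smul,
    smul_eq_mul, hsymm, hxz] at h1 hsq
  rw [← hm] at h1
  rw [hquad, ← hCz]
  have hzz0 := dotProduct_self_nonneg' z
  have hcoef : s * k ^ 2 / (1 - s * m⁻¹) * (y ⬝ᵥ y) = s * m / (m - s) * (k ^ 2 * (y ⬝ᵥ y)) := by
    have : m - s ≠ 0 := by linarith
    have h' : 1 - s * m⁻¹ = (m - s) / m := by field_simp
    rw [h']; field_simp
  -- `τ ↦ τ m / (m - τ)` is increasing on `[0, m)`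
  have hmono : t * m / (m - t) ≤ s * m / (m - s) := by
    rw [div_le_div_iff₀ (by linarith) (by linarith)]
    nlinarith [mul_nonneg hm0.le (mul_nonneg hm0.le (sub_nonneg.2 hts))]
  have hc : t * m / (m - t) * (z ⬝ᵥ z) ≤ s * k ^ 2 / (1 - s * m⁻¹) * (y ⬝ᵥ y) := by
    rw [hcoef]
    have : 0 ≤ s * m / (m - s) := div_nonneg (by nlinarith) (by linarith)
    exact mul_le_mul hmono hzz hzz0 this
  have hmt : 0 < m - t := by linarith
  have hmt' : m - t ≠ 0 := hmt.ne'
  have hexp : t * m / (m - t) * (z ⬝ᵥ z) = (t + t ^ 2 / (m - t)) * (z ⬝ᵥ z) := by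
    field_simp
    ring
  have hfin : 0 ≤ (m - t) * (x ⬝ᵥ x + 2 * (x ⬝ᵥ z) + z ⬝ᵥ z) + 2 * t * (x ⬝ᵥ z + z ⬝ᵥ z)
      + t ^ 2 / (m - t) * (z ⬝ᵥ z) := by
    have h := div_nonneg hsq hmt.le
    refine h.trans_eq ?_
    rw [div_eq_iff hmt']
    field_simp
    ring
  linarith

theorem stmt9 (p r : ℕ) (hr : 1 ≤ r)
    (B : Matrix (Fin p ⊕ Fin r) (Fin p ⊕ Fin r) ℝ)
    (B11 C11 C12 : Matrix (Fin p) (Fin p) ℝ) (B12 : Matrix (Fin p) (Fin r) ℝ)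
    (B22 : Matrix (Fin r) (Fin r) ℝ)
    (hBdef : B = fromBlocks B11 B12 B12ᵀ B22)
    (hB : B.PosSemidef) (hrank : p ≤ B.rank)
    (hsplit : B11 = C11 + C12) (hC11 : C11.PosDef)
    (hgap : specNorm B22 < lmin C11) (hC12 : C12.PosSemidef) :
    ∀ j : ℕ, 1 ≤ j → j ≤ r →
      eigvalDesc B (p + j) ≥ eigvalDesc (B22 - B12ᵀ * C11⁻¹ * B12) j
        - specNorm B22 * specNorm (C11⁻¹ * B12) ^ 2
          / (1 - specNorm B22 * specNorm C11⁻¹) := by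
  intro j hj hjr
  have hs0 : 0 ≤ specNorm B22 := specNorm_nonneg B22
  have hm0 : 0 < lmin C11 := by linarith
  -- for `p = 0` the default value of `lmin` is `0`, which contradicts the gap hypothesis
  have hp : 0 < p := by
    rcases Nat.eq_zero_or_pos p with rfl | h
    · simp [lmin, eigvalDesc] at hm0
    · exact h
  rw [specNorm_inv hC11 hm0 (by simpa using hp)]
  set c := specNorm B22 * specNorm (C11⁻¹ * B12) ^ 2 / (1 - specNorm B22 * (lmin C11)⁻¹) with hc
  set S := B22 - B12ᵀ * C11⁻¹ * B12 with hS
  have hc0 : 0 ≤ c := by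
    refine div_nonneg (by positivity) ?_
    rw [← div_eq_mul_inv, sub_nonneg, div_le_one hm0]
    exact hgap.le
  have hB22 : B22.IsHermitian := by
    have h := hB.1
    rw [hBdef, isHermitian_fromBlocks_iff] at h
    exact h.2.2.2
  have hSH : S.IsHermitian := by
    refine hB22.sub ?_
    simpa using isHermitian_conjTranspose_mul_mul B12 hC11.1.inv
  obtain ⟨l, v, hl, hAv, hvv, hxx, hxA, hev⟩ := exists_spectral_data hB.1
  obtain ⟨l', v', hl', hAv', hvv', hxx', hxA', hev'⟩ := exists_spectral_data hSH
  have hcardB : Fintype.card (Fin p ⊕ Fin r) = p + r := by simp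
  have hcardS : Fintype.card (Fin r) = r := by simp
  set a : Fin (Fintype.card (Fin p ⊕ Fin r)) := ⟨p + j - 1, by omega⟩ with ha
  set b : Fin (Fintype.card (Fin r)) := ⟨j - 1, by omega⟩ with hb
  have hla : eigvalDesc B (p + j) = l a := by
    rw [← hev a]; congr 1; simp only [ha]; omega
  have hlb : eigvalDesc S j = l' b := by
    rw [← hev' b]; congr 1; simp only [hb]; omega
  rw [hla, hlb, ge_iff_le]
  set t := l' b - c with ht
  have hla0 : 0 ≤ l a := by
    have h := hB.dotProduct_mulVec_nonneg (v a)
    simpa [hAv, dotProduct_smul, hvv] using h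
  by_contra! hlt
  have ht0 : 0 ≤ t := hla0.trans hlt.le
  -- `S ≤ B22`, so no eigenvalue of `S` exceeds `‖B22‖`
  have hts : t ≤ specNorm B22 := by
    have h1 : v' b ⬝ᵥ (S *ᵥ v' b) = l' b := by
      rw [hAv', dotProduct_smul, hvv', smul_eq_mul, mul_one]
    have h2 := quad_le_specNorm B22 (v' b)
    have h3 : 0 ≤ v' b ⬝ᵥ ((B12ᵀ * C11⁻¹ * B12) *ᵥ v' b) := by
      have : (B12ᵀ * C11⁻¹ * B12).PosSemidef := by
        simpa using hC11.inv.posSemidef.conjTranspose_mul_mul_same B12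
      simpa using this.dotProduct_mulVec_nonneg (v' b)
    rw [hS, sub_mulVec, dotProduct_sub] at h1
    rw [hvv'] at h2
    linarith
  obtain ⟨u, hu0, hu1, hu2⟩ : ∃ u : Fin p ⊕ Fin r → ℝ, u ≠ 0 ∧ (∀ i, i < a → v i ⬝ᵥ u = 0) ∧
      (∀ i, b < i → v' i ⬝ᵥ (u ∘ Sum.inr) = 0) := by
    -- `(p + j - 1) + (r - j)` linear conditions on a space of dimension `p + r`
    let f : (Fin p ⊕ Fin r → ℝ) →ₗ[ℝ] (Fin (p + j - 1) ⊕ Fin (r - j) → ℝ) :=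
      LinearMap.pi (Sum.elim
        (fun i => dotProductBilin ℝ ℝ (v ⟨i, by have := i.2; omega⟩))
        (fun i => dotProductBilin ℝ ℝ (v' ⟨j + i, by have := i.2; omega⟩) ∘ₗ
          LinearMap.funLeft ℝ ℝ Sum.inr))
    have hker : LinearMap.ker f ≠ ⊥ := by
      apply LinearMap.ker_ne_bot_of_finrank_lt
      simp only [Module.finrank_fintype_fun_eq_card, Fintype.card_sum, Fintype.card_fin]
      omega
    obtain ⟨u, huf, hu0⟩ := Submodule.exists_mem_ne_zero_of_ne_bot hker
    rw [LinearMap.mem_ker] at huf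
    refine ⟨u, hu0, fun i hi => ?_, fun i hi => ?_⟩
    · exact congrFun huf (Sum.inl ⟨i, Fin.lt_def.1 hi⟩)
    · have hi1 : j - 1 < (i : ℕ) := Fin.lt_def.1 hi
      have hi2 := i.2
      have h := congrFun huf (Sum.inr ⟨i - j, by omega⟩)
      have hij : (⟨j + (i - j), by omega⟩ : Fin (Fintype.card (Fin r))) = i := by
        ext; simp; omega
      change v' ⟨j + (i - j), _⟩ ⬝ᵥ (u ∘ Sum.inr) = 0 at h
      rwa [hij] at h
  set x := u ∘ Sum.inl with hx
  set y := u ∘ Sum.inr with hy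
  have hupos : 0 < u ⬝ᵥ u :=
    lt_of_le_of_ne (dotProduct_self_nonneg' u) fun h => hu0 (dotProduct_self_eq_zero.1 h.symm)
  have hup : u ⬝ᵥ (B *ᵥ u) ≤ l a * (u ⬝ᵥ u) := by
    rw [hxx, hxA, Finset.mul_sum]
    refine Finset.sum_le_sum fun i _ => ?_
    rcases lt_or_ge i a with h | h
    · simp [hu1 i h]
    · exact mul_le_mul_of_nonneg_right (hl h) (sq_nonneg _)
  have hlow : l' b * (y ⬝ᵥ y) ≤ y ⬝ᵥ (S *ᵥ y) := by
    rw [hxx', hxA', Finset.mul_sum]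
    refine Finset.sum_le_sum fun i _ => ?_
    rcases lt_or_ge b i with h | h
    · simp [hu2 i h]
    · exact mul_le_mul_of_nonneg_right (hl' h) (sq_nonneg _)
  have hue : u = Sum.elim x y := by
    rw [hx, hy, Sum.elim_comp_inl_inr]
  have huu : u ⬝ᵥ u = x ⬝ᵥ x + y ⬝ᵥ y := by
    conv_lhs => rw [hue]
    exact sumElim_dotProduct_sumElim ..
  have hform : u ⬝ᵥ (B *ᵥ u) = x ⬝ᵥ (C11 *ᵥ x) + x ⬝ᵥ (C12 *ᵥ x) + 2 * (x ⬝ᵥ (B12 *ᵥ y))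
      + y ⬝ᵥ (B22 *ᵥ y) := by
    have h1 : y ⬝ᵥ (B12ᵀ *ᵥ x) = x ⬝ᵥ (B12 *ᵥ y) := by
      rw [dotProduct_mulVec, vecMul_transpose, dotProduct_comm]
    rw [hBdef, fromBlocks_mulVec, ← hx, ← hy]
    conv_lhs => rw [hue]
    rw [sumElim_dotProduct_sumElim, hsplit, add_mulVec, dotProduct_add, dotProduct_add,
      dotProduct_add, h1]
    ring
  have hC12x : 0 ≤ x ⬝ᵥ (C12 *ᵥ x) := by simpa using hC12.dotProduct_mulVec_nonneg x
  have hmain := block_form_lower_bound B12 hC11 ht0 hts hgap x y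
  rw [hS, sub_mulVec, dotProduct_sub] at hlow
  rw [← hc] at hmain
  have := mul_pos (sub_pos.2 hlt) hupos
  rw [hform] at hup
  nlinarith
end
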